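/- arXiv:1609.05544 — 2 statements merged into one kernel-verified Lean document; each statement's English description precedes it below -/
import Mathlib

section
/- Let φ : [0,∞) → ℝ be a differentiable function with φ(0) < 1 satisfying φ′(t) = −1/(1−φ(t))² for all t ≥ 0 (in particular φ(t) ≠ 1 for all t). Then φ(t) → −∞ as t → ∞, and consequently e(t) := 1/(1−φ(t)) satisfies lim_{t→∞} e(t) = 0. -/
/-!
The gap `u = 1 - φ` solves `u' = 1 / u ^ 2`, that is `(u ^ 3)' = 3`: its cube grows linearly, so
`u` tends to infinity and `1 / u` to zero. As `u' ≥ 0` throughout, `u` never falls below `u 0 > 0`,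
which keeps it away from the singularity of the equation.
-/

open Filter Topology

open Set

theorem tendsto_atTop_of_tendsto_pow_atTop {α R : Type*} [Semiring R] [LinearOrder R]
    [IsStrictOrderedRing R] {l : Filter α} {f : α → R} (n : ℕ) (hf : ∀ᶠ a in l, 0 ≤ f a)
    (hpow : Tendsto (fun a => f a ^ n) l atTop) : Tendsto f l atTop := by
  refine tendsto_atTop.2 fun M => ?_
  filter_upwards [hf, hpow.eventually_gt_atTop (M ^ n)] with a ha hM
  exact (lt_of_pow_lt_pow_left₀ n ha hM).le

section InversePowerODE

variable {u : ℝ → ℝ} {s : Set ℝ} {c : ℝ} {n : ℕ}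

theorem monotoneOn_of_hasDerivWithinAt_div_pow (hs : Convex ℝ s) (hc : 0 ≤ c) (hn : Even n)
    (hu : ∀ t ∈ s, HasDerivWithinAt u (c / u t ^ n) s t) : MonotoneOn u s :=
  monotoneOn_of_hasDerivWithinAt_nonneg hs (fun t ht => (hu t ht).continuousWithinAt)
    (fun t ht => (hu t (interior_subset ht)).mono interior_subset)
    fun t _ => div_nonneg hc (hn.pow_nonneg (u t))

theorem hasDerivWithinAt_pow_succ_of_div_pow {t : ℝ} (hne : u t ≠ 0)
    (hu : HasDerivWithinAt u (c / u t ^ n) s t) :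
    HasDerivWithinAt (fun x => u x ^ (n + 1)) ((n + 1) * c) s t := by
  refine (hu.fun_pow (n + 1)).congr_deriv ?_
  rw [Nat.add_sub_cancel, Nat.cast_succ, mul_assoc, mul_div_cancel₀ c (pow_ne_zero n hne)]

theorem pow_succ_sub_pow_succ_of_hasDerivWithinAt_div_pow (hs : Convex ℝ s)
    (hne : ∀ t ∈ s, u t ≠ 0) (hu : ∀ t ∈ s, HasDerivWithinAt u (c / u t ^ n) s t)
    {a b : ℝ} (ha : a ∈ s) (hb : b ∈ s) :
    u b ^ (n + 1) - u a ^ (n + 1) = (n + 1) * c * (b - a) := by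
  have hderiv : ∀ t ∈ s,
      HasDerivWithinAt (fun x => u x ^ (n + 1) - (n + 1) * c * x) 0 s t := fun t ht => by
    simpa using (hasDerivWithinAt_pow_succ_of_div_pow (hne t ht) (hu t ht)).fun_sub
      ((hasDerivWithinAt_id t s).const_mul ((n + 1) * c))
  have hconst := hs.norm_image_sub_le_of_norm_hasDerivWithin_le hderiv
    (fun _ _ => norm_zero.le) ha hb
  rw [zero_mul, norm_le_zero_iff] at hconst
  linear_combination hconst

theorem tendsto_atTop_of_hasDerivWithinAt_div_pow {a : ℝ} (hc : 0 < c)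
    (hpos : ∀ t ∈ Ici a, 0 < u t)
    (hu : ∀ t ∈ Ici a, HasDerivWithinAt u (c / u t ^ n) (Ici a) t) : Tendsto u atTop atTop := by
  have hsol : ∀ t ∈ Ici a, (n + 1) * c * (t - a) + u a ^ (n + 1) = u t ^ (n + 1) := fun t ht =>
    (eq_add_of_sub_eq <| pow_succ_sub_pow_succ_of_hasDerivWithinAt_div_pow (convex_Ici a)
      (fun x hx => (hpos x hx).ne') hu self_mem_Ici ht).symm
  have hlin : Tendsto (fun t => (n + 1) * c * (t - a) + u a ^ (n + 1)) atTop atTop :=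
    tendsto_atTop_add_const_right _ _ <|
      (tendsto_atTop_add_const_right _ (-a) tendsto_id).const_mul_atTop (by positivity)
  have hev : ∀ᶠ t in atTop, t ∈ Ici a := eventually_ge_atTop a
  exact tendsto_atTop_of_tendsto_pow_atTop (n + 1) (hev.mono fun t ht => (hpos t ht).le)
    (hlin.congr' (hev.mono hsol))

end InversePowerODE

-- With `w = e`, the error equation `e = φ * e + ν` gives `e = ν / (1 - φ)`, hence `φ' = -e ^ 2`.
theorem destabilizing_perturbation_integer_case_general {φ : ℝ → ℝ} {ν : ℝ} (hν : ν ≠ 0)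
    (h0 : φ 0 < 1)
    (hode : ∀ t ∈ Ici (0 : ℝ), HasDerivWithinAt φ (-ν ^ 2 / (1 - φ t) ^ 2) (Ici 0) t) :
    Tendsto φ atTop atBot ∧ Tendsto (fun t => ν / (1 - φ t)) atTop (𝓝 0) := by
  have hgap : ∀ t ∈ Ici (0 : ℝ),
      HasDerivWithinAt (fun x => 1 - φ x) (ν ^ 2 / (1 - φ t) ^ 2) (Ici 0) t := fun t ht => by
    simpa [neg_div] using (hode t ht).const_sub 1
  have hmono : MonotoneOn (fun t => 1 - φ t) (Ici 0) :=
    monotoneOn_of_hasDerivWithinAt_div_pow (convex_Ici 0) (sq_nonneg ν) even_two hgap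
  have hpos : ∀ t ∈ Ici (0 : ℝ), 0 < 1 - φ t := fun t ht =>
    (sub_pos.2 h0).trans_le (hmono self_mem_Ici ht ht)
  have hlim : Tendsto (fun t => 1 - φ t) atTop atTop :=
    tendsto_atTop_of_hasDerivWithinAt_div_pow (sq_pos_of_ne_zero hν) hpos hgap
  refine ⟨?_, hlim.const_div_atTop ν⟩
  simpa using tendsto_atBot_add_const_left atTop 1 (tendsto_neg_atTop_atBot.comp hlim)

/-- for the scalar adaptive error ODE `φ′(t) = -1/(1-φ(t))²` with
`φ(0) < 1` (in particular `φ(t) ≠ 1` for all `t ≥ 0`), the parameter error `φ` diverges to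
`-∞` and the adaptation error `e(t) = 1/(1-φ(t))` converges to `0`. -/
theorem destabilizing_perturbation_integer_case
    (φ : ℝ → ℝ) (hdiff : Differentiable ℝ φ) (h0 : φ 0 < 1)
    (hne : ∀ t ≥ (0:ℝ), φ t ≠ 1)
    (hode : ∀ t ≥ (0:ℝ), deriv φ t = -1 / (1 - φ t) ^ 2) :
    Tendsto φ atTop atBot ∧ Tendsto (fun t => 1 / (1 - φ t)) atTop (𝓝 0) := by
  simpa using destabilizing_perturbation_integer_case_general one_ne_zero h0 fun t ht => by
    simpa [hode t ht] using (hdiff t).hasDerivAt.hasDerivWithinAt (s := Ici 0)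
end

section
/- Let α ∈ (0,1) and let E_α(z) = ∑_{k≥0} z^k/Γ(αk+1) be the Mittag-Leffler function. Then there exist real numbers 0 < s < t such that E_α(t^α) ≠ E_α(s^α) · E_α((t−s)^α); that is, the one-parameter family t ↦ E_α(t^α) does not satisfy the semigroup (flow) property satisfied by the exponential when α = 1. -/
open Filter Topology

noncomputable section

/-- Scalar Mittag-Leffler function `E_α(z) = ∑_{k≥0} z^k / Γ(αk+1)`. -/
def mlE (α z : ℝ) : ℝ := ∑' k : ℕ, z ^ k / Real.Gamma (α * k + 1)

/-! The semigroup property along `t = 2s` says `E_α(2^α x) = E_α(x)²` for all `x = s^α > 0`.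
Since `E_α(0) = 1` and `E_α'(0) = 1 / Γ(α + 1) ≠ 0`, differentiating at `x = 0` gives `2^α = 2`,
hence `α = 1`. -/

section Semigroup

variable {𝔸 : Type*} [NormedRing 𝔸] [NormedAlgebra ℝ 𝔸] {f : ℝ → 𝔸} {c : 𝔸}

lemma eq_two_of_comp_mul_eq_mul_self {r : ℝ} (hf₀ : f 0 = 1) (hf : HasDerivAt f c 0) (hc : c ≠ 0)
    (h : ∀ᶠ x in 𝓝[>] 0, f (r * x) = f x * f x) : r = 2 := by
  have deriv_comp : HasDerivAt (fun x ↦ f (r * x)) (r • c) 0 := by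
    have hf' : HasDerivAt f c (r * 0) := by rwa [mul_zero]
    simpa only [mul_one, Function.comp_def] using
      hf'.scomp 0 ((hasDerivAt_id' (0 : ℝ)).const_mul r)
  have deriv_sq : HasDerivAt (fun x ↦ f x * f x) ((2 : ℝ) • c) 0 := by
    simpa only [hf₀, mul_one, one_mul, two_smul] using hf.fun_mul hf
  have deriv_comp' : HasDerivWithinAt (fun x ↦ f (r * x)) ((2 : ℝ) • c) (Set.Ioi 0) 0 :=
    deriv_sq.hasDerivWithinAt.congr_of_eventuallyEq h (by simp only [mul_zero, hf₀, mul_one])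
  exact smul_left_injective ℝ hc <|
    (uniqueDiffWithinAt_Ioi 0).eq_deriv _ deriv_comp.hasDerivWithinAt deriv_comp'

lemma exponent_eq_one_of_semigroup {α : ℝ} (hα : α ≠ 0) (hf₀ : f 0 = 1) (hf : HasDerivAt f c 0)
    (hc : c ≠ 0)
    (h : ∀ s t : ℝ, 0 < s → s < t → f (t ^ α) = f (s ^ α) * f ((t - s) ^ α)) : α = 1 := by
  have double (x : ℝ) (hx : 0 < x) : f (2 ^ α * x) = f x * f x := by
    obtain ⟨s, hs, rfl⟩ : ∃ s : ℝ, 0 < s ∧ s ^ α = x :=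
      ⟨x ^ α⁻¹, Real.rpow_pos_of_pos hx _, Real.rpow_inv_rpow hx.le hα⟩
    have h_double := h s (2 * s) hs (by linarith)
    rwa [Real.mul_rpow zero_le_two hs.le, two_mul, add_sub_cancel_right] at h_double
  have two_rpow : (2 : ℝ) ^ α = 2 :=
    eq_two_of_comp_mul_eq_mul_self hf₀ hf hc (eventually_mem_nhdsWithin.mono double)
  exact (Real.rpow_right_inj two_pos one_lt_two.ne').mp (two_rpow.trans (Real.rpow_one 2).symm)

end Semigroup

lemma one_le_Gamma {x : ℝ} (hx : 2 ≤ x) : 1 ≤ Real.Gamma x :=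
  Real.Gamma_two.symm.trans_le <|
    Real.Gamma_strictMonoOn_Ici.monotoneOn Set.self_mem_Ici hx hx

/-- The power series `∑ zᵏ / Γ(αk+1)` defining `mlE α`, as a formal multilinear series, so that
`mlE α` can be differentiated by the general theory of analytic functions. -/
def mlESeries (α : ℝ) : FormalMultilinearSeries ℝ ℝ ℝ :=
  .ofScalars ℝ fun k ↦ (Real.Gamma (α * k + 1))⁻¹

lemma mlESeries_sum (α : ℝ) : (mlESeries α).sum = mlE α := by
  funext z
  refine (FormalMultilinearSeries.ofScalars_sum_eq _ z).trans (tsum_congr fun k ↦ ?_)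
  rw [smul_eq_mul, inv_mul_eq_div]

lemma mlE_zero (α : ℝ) : mlE α 0 = 1 := by
  rw [mlE, tsum_eq_single 0 fun k hk ↦ by rw [zero_pow hk, zero_div]]
  simp

lemma one_le_radius_mlESeries {α : ℝ} (hα : 0 < α) : 1 ≤ (mlESeries α).radius := by
  have arg_large : ∀ᶠ k : ℕ in atTop, 1 ≤ α * k :=
    (tendsto_natCast_atTop_atTop.const_mul_atTop hα).eventually_ge_atTop 1
  refine (mlESeries α).le_radius_of_eventually_le (r := 1) 1 ?_
  filter_upwards [arg_large] with k hk
  have one_le : 1 ≤ Real.Gamma (α * k + 1) := one_le_Gamma (by linarith)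
  rw [mlESeries, FormalMultilinearSeries.ofScalars_norm, NNReal.coe_one, one_pow, mul_one,
    Real.norm_of_nonneg (by positivity)]
  exact inv_le_one_of_one_le₀ one_le

lemma hasFPowerSeriesAt_mlE {α : ℝ} (hα : 0 < α) : HasFPowerSeriesAt (mlE α) (mlESeries α) 0 := by
  rw [← mlESeries_sum]
  exact ((mlESeries α).hasFPowerSeriesOnBall
    (zero_lt_one.trans_le (one_le_radius_mlESeries hα))).hasFPowerSeriesAt

lemma hasDerivAt_mlE_zero {α : ℝ} (hα : 0 < α) : HasDerivAt (mlE α) (Real.Gamma (α + 1))⁻¹ 0 := by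
  simpa [mlESeries] using (hasFPowerSeriesAt_mlE hα).hasDerivAt

theorem mittagLeffler_no_semigroup_property_general {α : ℝ} (hα : 0 < α) (hα₁ : α ≠ 1) :
    ∃ s t : ℝ, 0 < s ∧ s < t ∧
      mlE α (t ^ α) ≠ mlE α (s ^ α) * mlE α ((t - s) ^ α) := by
  by_contra! semigroup
  have deriv_ne_zero : (Real.Gamma (α + 1))⁻¹ ≠ 0 :=
    inv_ne_zero (Real.Gamma_pos_of_pos (by linarith)).ne'
  exact hα₁ <| exponent_eq_one_of_semigroup hα.ne' (mlE_zero α) (hasDerivAt_mlE_zero hα)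
    deriv_ne_zero semigroup

/-- for `α ∈ (0,1)` the family `t ↦ E_α(t^α)` fails the semigroup
property: there are `0 < s < t` with `E_α(t^α) ≠ E_α(s^α) · E_α((t-s)^α)`. -/
theorem mittagLeffler_no_semigroup_property
    (α : ℝ) (hα : α ∈ Set.Ioo (0:ℝ) 1) :
    ∃ s t : ℝ, 0 < s ∧ s < t ∧
      mlE α (t ^ α) ≠ mlE α (s ^ α) * mlE α ((t - s) ^ α) :=
  mittagLeffler_no_semigroup_property_general hα.1 hα.2.ne
end
end
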